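/- arXiv:2106.05918 — 5 statements merged into one kernel-verified Lean document; each statement's English description precedes it below -/
import Mathlib

section
/- For every j ∈ {1,…,n}, Cov_*(s*, w_j*) = e_j − s₀, and Var_*(Σ_{j=1}^n w_j*(e_j − s₀)) = Σ_{j=1}^n (e_j − s₀)². Consequently the three variance estimators coincide: Var_*(l*) = JK_B = IJ_B, where l* = Σ_j w_j*(e_j − s₀), JK_B := Σ_{j=1}^n (e_j − s₀)² and IJ_B := Σ_{j=1}^n Cov_*(s*, w_j*)². -/
open Finset

/-- The bootstrap expectation operator: `n` i.i.d. draws uniform on `{x 1, …, x n}` are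
encoded by index maps `σ : Fin n → Fin n`, each having probability `n⁻ⁿ`. -/
noncomputable def bootE (n : ℕ) (g : (Fin n → Fin n) → ℝ) : ℝ :=
  ((n : ℝ) ^ n)⁻¹ * ∑ σ : Fin n → Fin n, g σ

/-- The bootstrap count `w_j* = #{i : X_i* = x_j}` as a real number. -/
noncomputable def bootCount (n : ℕ) (j : Fin n) (σ : Fin n → Fin n) : ℝ :=
  ((univ.filter fun i => σ i = j).card : ℝ)

/-- Covariance with respect to the bootstrap resampling. -/
noncomputable def bootCov (n : ℕ) (f g : (Fin n → Fin n) → ℝ) : ℝ :=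
  bootE n (fun σ => f σ * g σ) - bootE n f * bootE n g

/-- Variance with respect to the bootstrap resampling. -/
noncomputable def bootVar (n : ℕ) (f : (Fin n → Fin n) → ℝ) : ℝ :=
  bootCov n f f

/-! Overwriting one draw by an independent uniform value leaves the law of the sample unchanged.
Splitting a count as `w_j* = ∑ᵢ 1{Xᵢ* = x_j}`, this gives `E_*[s* w_j*] = e_j` for symmetric `s`,
the `n` equal contributions cancelling the factor `1/n` that each indicator produces.  Hence
`Cov_*(s*, w_j*) = e_j - s₀`.  The linear statistic `l* = ∑ᵢ a(Xᵢ*)` is itself symmetric, so the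
same formula yields `Cov_*(l*, w_j*) = a_j - ā`, and the variance of `l*` follows by expanding its
second argument in the counts. -/

open scoped BigOperators

section UniformSample

variable {ι κ M : Type*} [Fintype ι] [DecidableEq ι] [Fintype κ] [AddCommMonoid M] [Module ℚ≥0 M]

theorem expect_expect_update (i : ι) (g : (ι → κ) → M) :
    𝔼 j, 𝔼 σ, g (Function.update σ i j) = 𝔼 σ, g σ := by
  cases isEmpty_or_nonempty κ
  · have : IsEmpty (ι → κ) := ⟨fun σ => isEmptyElim (σ i)⟩
    simp
  -- Exchanging the `i`-th draw with the fresh value is a symmetry of `κ × (ι → κ)`.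
  have hswap : Function.Involutive
      fun p : κ × (ι → κ) => (p.2 i, Function.update p.2 i p.1) := fun p => by simp
  calc 𝔼 j, 𝔼 σ, g (Function.update σ i j)
      = 𝔼 p : κ × (ι → κ), g (Function.update p.2 i p.1) :=
        (expect_product' univ univ fun j σ => g (Function.update σ i j)).symm
    _ = 𝔼 p : κ × (ι → κ), g p.2 := Fintype.expect_equiv hswap.toPerm _ _ fun _ => rfl
    _ = 𝔼 _j : κ, 𝔼 σ, g σ := expect_product' univ univ fun _ σ => g σ
    _ = 𝔼 σ, g σ := Fintype.expect_const _

theorem expect_comp_eval (i : ι) (a : κ → M) :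
    𝔼 σ : ι → κ, a (σ i) = 𝔼 k, a k := by
  cases isEmpty_or_nonempty κ
  · have : IsEmpty (ι → κ) := ⟨fun σ => isEmptyElim (σ i)⟩
    simp
  rw [← expect_expect_update i]
  simp only [Function.update_self, Fintype.expect_const]

theorem expect_ite_apply_eq [DecidableEq κ] (i : ι) (j : κ) (g : (ι → κ) → M) :
    𝔼 σ, (if σ i = j then g σ else 0)
      = (Fintype.card κ : ℚ≥0)⁻¹ • 𝔼 σ, g (Function.update σ i j) := by
  rw [← expect_expect_update i, expect_comm]
  simp [smul_expect]

theorem expect_update_eq_of_comp_perm {g : (ι → κ) → M}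
    (hg : ∀ (π : Equiv.Perm ι) (σ : ι → κ), g (σ ∘ π) = g σ) (i i' : ι) (j : κ) :
    𝔼 σ, g (Function.update σ i j) = 𝔼 σ, g (Function.update σ i' j) := by
  refine Fintype.expect_equiv ((Equiv.swap i i').arrowCongr (Equiv.refl κ)) _ _ fun σ => ?_
  rw [← hg (Equiv.swap i i') (Function.update σ i j), Function.update_comp_equiv]
  simp [Equiv.arrowCongr]

end UniformSample

section Bootstrap

variable {n : ℕ}

theorem bootE_eq_expect (g : (Fin n → Fin n) → ℝ) : bootE n g = 𝔼 σ, g σ := by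
  simp [bootE, Fintype.expect_eq_sum_div_card, div_eq_inv_mul]

theorem bootCount_eq_sum (j : Fin n) (σ : Fin n → Fin n) :
    bootCount n j σ = ∑ i, if σ i = j then 1 else 0 := by
  simp [bootCount]

theorem sum_bootCount_mul (a : Fin n → ℝ) (σ : Fin n → Fin n) :
    ∑ j, bootCount n j σ * a j = ∑ i, a (σ i) := by
  simp only [bootCount_eq_sum, sum_mul, ite_mul, one_mul, zero_mul]
  rw [sum_comm]
  simp

theorem bootE_mul_bootCount {g : (Fin n → Fin n) → ℝ}
    (hg : ∀ (π : Equiv.Perm (Fin n)) (σ : Fin n → Fin n), g (σ ∘ π) = g σ) (i j : Fin n) :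
    bootE n (fun σ => g σ * bootCount n j σ) = bootE n fun σ => g (Function.update σ i j) := by
  have hn : (n : ℚ≥0) ≠ 0 := Nat.cast_ne_zero.mpr i.pos.ne'
  simp only [bootE_eq_expect]
  calc 𝔼 σ, g σ * bootCount n j σ
      = ∑ i', 𝔼 σ, (if σ i' = j then g σ else 0) := by
        simp only [bootCount_eq_sum, mul_sum, mul_ite, mul_one, mul_zero, expect_sum_comm]
    _ = ∑ _i' : Fin n, (n : ℚ≥0)⁻¹ • 𝔼 σ, g (Function.update σ i j) := by
        simp only [expect_ite_apply_eq, expect_update_eq_of_comp_perm hg _ i, Fintype.card_fin]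
    _ = 𝔼 σ, g (Function.update σ i j) := by
        rw [sum_const, card_univ, Fintype.card_fin, ← Nat.cast_smul_eq_nsmul ℚ≥0,
          smul_inv_smul₀ hn]

theorem bootE_bootCount (j : Fin n) : bootE n (bootCount n j) = 1 := by
  have : Nonempty (Fin n) := ⟨j⟩
  simpa [bootE_eq_expect] using bootE_mul_bootCount (g := fun _ => 1) (fun _ _ => rfl) j j

theorem bootCov_bootCount {g : (Fin n → Fin n) → ℝ}
    (hg : ∀ (π : Equiv.Perm (Fin n)) (σ : Fin n → Fin n), g (σ ∘ π) = g σ) (i j : Fin n) :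
    bootCov n g (bootCount n j) = bootE n (fun σ => g (Function.update σ i j)) - bootE n g := by
  rw [bootCov, bootE_mul_bootCount hg i, bootE_bootCount, mul_one]

theorem bootCov_sum_mul_right {ι : Type*} (t : Finset ι) (f : (Fin n → Fin n) → ℝ)
    (g : ι → (Fin n → Fin n) → ℝ) (a : ι → ℝ) :
    bootCov n f (fun σ => ∑ k ∈ t, g k σ * a k) = ∑ k ∈ t, bootCov n f (g k) * a k := by
  simp only [bootCov, bootE_eq_expect, mul_sum, ← mul_assoc, expect_sum_comm, ← expect_mul,
    sub_mul, sum_sub_distrib]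

theorem bootCov_sum_bootCount_mul_bootCount (a : Fin n → ℝ) (j : Fin n) :
    bootCov n (fun σ => ∑ k, bootCount n k σ * a k) (bootCount n j) = a j - 𝔼 k, a k := by
  have : Nonempty (Fin n) := ⟨j⟩
  simp only [sum_bootCount_mul]
  -- Any draw may be the overwritten one; the index `j` is at hand.
  have hupdate (σ : Fin n → Fin n) :
      ∑ i, a (Function.update σ j j i) - ∑ i, a (σ i) = a j - a (σ j) := by
    rw [← sum_sub_distrib, sum_eq_single j] <;> simp +contextual
  rw [bootCov_bootCount (fun π σ => Equiv.sum_comp π fun i => a (σ i)) j]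
  simp only [bootE_eq_expect, ← expect_sub_distrib, hupdate]
  rw [expect_sub_distrib, Fintype.expect_const, expect_comp_eval]

theorem bootVar_sum_bootCount_mul (a : Fin n → ℝ) :
    bootVar n (fun σ => ∑ j, bootCount n j σ * a j) = ∑ j, (a j - 𝔼 k, a k) ^ 2 := by
  have hcentered : ∑ j, (a j - 𝔼 k, a k) = 0 := by
    simpa only [Fintype.balance_apply] using Fintype.sum_balance a
  calc bootVar n (fun σ => ∑ j, bootCount n j σ * a j)
      = ∑ j, (a j - 𝔼 k, a k) * a j := by
        simp only [bootVar, bootCov_sum_mul_right, bootCov_sum_bootCount_mul_bootCount]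
    _ = ∑ j, (a j - 𝔼 k, a k) ^ 2 + (∑ j, (a j - 𝔼 k, a k)) * 𝔼 k, a k := by
        rw [sum_mul, ← sum_add_distrib]
        exact sum_congr rfl fun j _ => by ring
    _ = ∑ j, (a j - 𝔼 k, a k) ^ 2 := by rw [hcentered, zero_mul, add_zero]

end Bootstrap

theorem bootstrap_three_estimators_coincide_general {n : ℕ} {α : Type*} (i : Fin n) (x : Fin n → α)
    (s : (Fin n → α) → ℝ) (hsym : ∀ (π : Equiv.Perm (Fin n)) (v : Fin n → α), s (v ∘ π) = s v)
    (s₀ : ℝ) (hs₀ : s₀ = bootE n fun σ => s (fun k => x (σ k)))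
    (e : Fin n → ℝ) (he : ∀ j, e j = bootE n fun σ => s (fun k => x (Function.update σ i j k))) :
    (∀ j : Fin n, bootCov n (fun σ => s (fun k => x (σ k))) (bootCount n j) = e j - s₀) ∧
    bootVar n (fun σ => ∑ j : Fin n, bootCount n j σ * (e j - s₀))
      = ∑ j : Fin n, (e j - s₀) ^ 2 ∧
    bootVar n (fun σ => ∑ j : Fin n, bootCount n j σ * (e j - s₀))
      = ∑ j : Fin n, (bootCov n (fun σ => s (fun k => x (σ k))) (bootCount n j)) ^ 2 := by
  have : Nonempty (Fin n) := ⟨i⟩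
  have hcov (j : Fin n) : bootCov n (fun σ => s (fun k => x (σ k))) (bootCount n j) = e j - s₀ := by
    rw [he, hs₀]
    exact bootCov_bootCount (fun π σ => hsym π fun k => x (σ k)) i j
  have hmean : 𝔼 j, (e j - s₀) = 0 := by
    simp only [expect_sub_distrib, Fintype.expect_const, he, hs₀, bootE_eq_expect]
    exact sub_eq_zero.mpr (expect_expect_update i fun σ => s fun k => x (σ k))
  have hvar : bootVar n (fun σ => ∑ j, bootCount n j σ * (e j - s₀)) = ∑ j, (e j - s₀) ^ 2 := by
    simp only [bootVar_sum_bootCount_mul, hmean, sub_zero]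
  exact ⟨hcov, hvar, by simp only [hcov, hvar]⟩

/-- for every `j`, `Cov_*(s*, w_j*) = e_j − s₀`, and
`Var_*(Σ_j w_j* (e_j − s₀)) = Σ_j (e_j − s₀)²`.  Consequently the three variance
estimators coincide: `Var_*(l*) = JK_B = IJ_B`, where `l* = Σ_j w_j*(e_j − s₀)`,
`JK_B = Σ_j (e_j − s₀)²` and `IJ_B = Σ_j Cov_*(s*, w_j*)²`. -/
theorem bootstrap_three_estimators_coincide
    (n : ℕ) (hn : 2 ≤ n) (x : Fin n → ℝ) (hx : Function.Injective x)
    (s : (Fin n → ℝ) → ℝ)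
    (hsym : ∀ (π : Equiv.Perm (Fin n)) (v : Fin n → ℝ), s (v ∘ π) = s v)
    (s₀ : ℝ) (hs₀ : s₀ = bootE n fun σ => s (fun i => x (σ i)))
    (e : Fin n → ℝ)
    (he : ∀ j, e j = bootE n fun σ => s (fun i => x (Function.update σ ⟨0, by omega⟩ j i))) :
    (∀ j : Fin n, bootCov n (fun σ => s (fun i => x (σ i))) (bootCount n j) = e j - s₀) ∧
    bootVar n (fun σ => ∑ j : Fin n, bootCount n j σ * (e j - s₀))
      = ∑ j : Fin n, (e j - s₀) ^ 2 ∧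
    bootVar n (fun σ => ∑ j : Fin n, bootCount n j σ * (e j - s₀))
      = ∑ j : Fin n, (bootCov n (fun σ => s (fun i => x (σ i))) (bootCount n j)) ^ 2 :=
  bootstrap_three_estimators_coincide_general ⟨0, by omega⟩ x s hsym s₀ hs₀ e he
end

section
/- The sequence (c_n) converges as n → ∞, and its limit c satisfies 0.24 ≤ c ≤ 0.25. (In particular, the infinitesimal jackknife systematically underestimates the variance of the bagged sample maximum of uniform data by roughly a factor of 4.) -/
open Finset Filter

/-- `a_n = Σ_{j=1}^n ((j−1)/n)ⁿ`. -/
noncomputable def aSeq (n : ℕ) : ℝ :=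
  ∑ j ∈ range n, ((j : ℝ) / n) ^ n

/-- `c_n = (n+1)·Σ_{i=1}^n [a_n − Σ_{j=i+1}^n ((j−1)/n)^{n−1}]² / ((n − a_n)(1 + a_n))`,
the ratio `E[Var_*(l*)]/Var(E_*[s*])` for the bootstrap-smoothed sample maximum of `n`
i.i.d. `Uniform[0,1]` random variables. -/
noncomputable def cSeq (n : ℕ) : ℝ :=
  ((n : ℝ) + 1) *
      (∑ i ∈ range n,
        (aSeq n - ∑ j ∈ Finset.Ico (i + 1) n, ((j : ℝ) / n) ^ (n - 1)) ^ 2) /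
    (((n : ℝ) - aSeq n) * (1 + aSeq n))

/-!
Let `t_n(m) = ∑_{j < n - m} (j/n)^{n-1}`. The `i`-th bracket in `c_n`, counting from `0`, is
`t_n(n-1-i) - d_n` with `d_n = t_n(0) - a_n`, and exchanging two sums shows that `d_n` is the mean
of `t_n(0), …, t_n(n-1)`. The sum of squares in `c_n` is therefore `∑_m t_n(m)² - n d_n²`.

Reversing the summation, `t_n(m) = ∑_{m < k ≤ n} (1 - k/n)^{n-1}`, whose terms tend to `e^{-k}` and
are at most `e^{1-k}`. Dominated convergence gives `t_n(m) → e^{-m}/(e-1)`, and, applied once more,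
the convergence of `n d_n = ∑_m t_n(m)` and of `∑_m t_n(m)²`. Hence `d_n → 0`, `n d_n² → 0`,
`a_n → 1/(e-1)`, and `c_n → e/((e-1)(e²-1)) ≈ 0.2476`.
-/

open scoped Topology

theorem sum_sub_sq_of_sum_eq_card_mul {ι R : Type*} [CommRing R] {s : Finset ι} {x : ι → R} {μ : R}
    (h : ∑ i ∈ s, x i = #s * μ) : ∑ i ∈ s, (x i - μ) ^ 2 = ∑ i ∈ s, x i ^ 2 - #s * μ ^ 2 := by
  simp only [sub_sq, sum_add_distrib, sum_sub_distrib, ← sum_mul, ← mul_sum, h, sum_const,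
    nsmul_eq_mul]
  ring

theorem sum_range_sum_range_sub {M : Type*} [AddCommMonoid M] (f : ℕ → M) (n : ℕ) :
    ∑ m ∈ range n, ∑ j ∈ range (n - m), f j = ∑ j ∈ range n, (n - j) • f j := by
  rw [sum_comm' (t' := range n) (s' := fun j ↦ range (n - j))
    (by simp only [mem_range]; omega)]
  simp only [sum_const, card_range]

theorem tendsto_finsetSum_of_dominated_convergence {α β G : Type*} [NormedAddCommGroup G]
    [CompleteSpace G] {l : Filter α} {s : α → Finset β} {f : α → β → G} {g : β → G} {bound : β → ℝ}
    (h_sum : Summable bound) (hs : Tendsto s l atTop) (hfg : ∀ k, Tendsto (f · k) l (𝓝 (g k)))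
    (h_bound : ∀ᶠ n in l, ∀ k ∈ s n, ‖f n k‖ ≤ bound k) :
    Tendsto (fun n ↦ ∑ k ∈ s n, f n k) l (𝓝 (∑' k, g k)) := by
  rcases l.eq_or_neBot with rfl | _
  · exact tendsto_bot
  have eventually_mem (k : β) : ∀ᶠ n in l, k ∈ s n := by
    simpa using hs.eventually_ge_atTop {k}
  have bound_nonneg (k : β) : 0 ≤ bound k := by
    obtain ⟨n, hn, hk⟩ := (h_bound.and (eventually_mem k)).exists
    exact (norm_nonneg _).trans (hn k hk)
  have h := tendsto_tsum_of_dominated_convergence (𝓕 := l)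
    (f := fun n ↦ (s n : Set β).indicator (f n)) h_sum
    (fun k ↦ (hfg k).congr' <| (eventually_mem k).mono fun n hn ↦
      (Set.indicator_of_mem (mem_coe.2 hn) (f n)).symm)
    (h_bound.mono fun n hn k ↦ by
      by_cases hk : k ∈ s n
      · simpa [hk] using hn k hk
      · simpa [hk] using bound_nonneg k)
  exact h.congr fun n ↦ (sum_eq_tsum_indicator (f n) (s n)).symm

theorem tendsto_add_div_sub_of_tendsto_atTop {α 𝕜 : Type*} [Field 𝕜] [LinearOrder 𝕜]
    [IsStrictOrderedRing 𝕜] [TopologicalSpace 𝕜] [OrderTopology 𝕜] {l : Filter α} {f a b : α → 𝕜}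
    {A B : 𝕜} (hf : Tendsto f l atTop) (ha : Tendsto a l (𝓝 A)) (hb : Tendsto b l (𝓝 B)) :
    Tendsto (fun x ↦ (f x + a x) / (f x - b x)) l (𝓝 1) := by
  have h := ((ha.div_atTop hf).const_add 1).div ((hb.div_atTop hf).const_sub 1) (by simp)
  rw [add_zero, sub_zero, div_one] at h
  refine h.congr' ?_
  filter_upwards [hf.eventually_ne_atTop 0] with x hx
  rw [Pi.div_apply, ← mul_div_mul_left _ _ hx, mul_add, mul_sub, mul_one, mul_div_cancel₀ _ hx,
    mul_div_cancel₀ _ hx]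

theorem tendsto_one_sub_div_pow_pred (x : ℝ) :
    Tendsto (fun n : ℕ ↦ (1 - x / n) ^ (n - 1)) atTop (𝓝 (Real.exp (-x))) := by
  have h_base : Tendsto (fun n : ℕ ↦ 1 - x / n) atTop (𝓝 1) := by
    simpa using (tendsto_const_div_atTop_nhds_zero_nat x).const_sub 1
  have h_pow : Tendsto (fun n : ℕ ↦ (1 - x / n) ^ n) atTop (𝓝 (Real.exp (-x))) := by
    simpa only [neg_div, ← sub_eq_add_neg] using Real.tendsto_one_add_div_pow_exp (-x)
  have h_div := h_pow.div h_base one_ne_zero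
  rw [div_one] at h_div
  refine h_div.congr' ?_
  filter_upwards [h_base.eventually_ne one_ne_zero, eventually_ne_atTop 0] with n hx hn
  rw [Pi.div_apply, div_eq_iff hx, pow_sub_one_mul hn]

theorem abs_one_sub_div_pow_pred_le_exp {n : ℕ} {x : ℝ} (hx : x ≤ n) :
    |(1 - x / n) ^ (n - 1)| ≤ Real.exp (1 - x) := by
  rcases n.eq_zero_or_pos with rfl | hn
  · simpa using hx.trans (Nat.cast_le_one.2 zero_le_one)
  have hn' : (0 : ℝ) < n := Nat.cast_pos.2 hn
  have h_le_one : x / n ≤ 1 := (div_le_one hn').2 hx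
  rw [abs_of_nonneg (pow_nonneg (sub_nonneg.2 h_le_one) _)]
  calc (1 - x / n) ^ (n - 1) ≤ Real.exp (-(x / n)) ^ (n - 1) :=
        pow_le_pow_left₀ (sub_nonneg.2 h_le_one) (Real.one_sub_le_exp_neg _) _
    _ = Real.exp (x / n - x) := by
        rw [← Real.exp_nat_mul, Nat.cast_pred hn]
        congr 1
        field_simp
        ring
    _ ≤ Real.exp (1 - x) := by gcongr

theorem hasSum_exp_neg_mul_nat {c : ℝ} (hc : 0 < c) :
    HasSum (fun k : ℕ ↦ Real.exp (-(c * k))) (1 - Real.exp (-c))⁻¹ := by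
  have h := hasSum_geometric_of_lt_one (Real.exp_nonneg (-c))
    (Real.exp_lt_one_iff.2 (neg_neg_of_pos hc))
  refine h.congr_fun fun k ↦ ?_
  rw [← Real.exp_nat_mul, mul_neg, mul_comm]

theorem hasSum_exp_neg_nat : HasSum (fun k : ℕ ↦ Real.exp (-k)) (1 - Real.exp (-1))⁻¹ := by
  simpa only [one_mul] using hasSum_exp_neg_mul_nat one_pos

/-- The sum `t_n(m)` of `(j/n)^(n-1)` over all `j < n` except the `m` largest, in terms of which
`cSeq` is rewritten. The index counts from the top because this is what makes the limit for fixed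
`m` nontrivial. -/
noncomputable def powSum (n m : ℕ) : ℝ := ∑ j ∈ range (n - m), ((j : ℝ) / n) ^ (n - 1)

theorem powSum_nonneg (n m : ℕ) : 0 ≤ powSum n m := by
  unfold powSum
  positivity

theorem powSum_eq_sum_one_sub_div_pow (n m : ℕ) :
    powSum n m = ∑ k ∈ range (n - m), (1 - (m + 1 + k : ℝ) / n) ^ (n - 1) := by
  rw [powSum, ← sum_range_reflect]
  refine sum_congr rfl fun k hk ↦ ?_
  have hk' : k + 1 + m ≤ n := by
    have := mem_range.1 hk
    omega
  have hn : (n : ℝ) ≠ 0 := by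
    rw [Nat.cast_ne_zero]
    omega
  rw [show n - m - 1 - k = n - (k + 1 + m) by omega, Nat.cast_sub hk', sub_div, div_self hn]
  push_cast
  ring_nf

theorem abs_one_sub_div_pow_pred_le_of_mem_range {n m k : ℕ} (hk : k ∈ range (n - m)) :
    |(1 - (m + 1 + k : ℝ) / n) ^ (n - 1)| ≤ Real.exp (-m) * Real.exp (-k) := by
  have h : (m + 1 + k : ℝ) ≤ n := by
    have := mem_range.1 hk
    exact_mod_cast (by omega : m + 1 + k ≤ n)
  refine (abs_one_sub_div_pow_pred_le_exp h).trans_eq ?_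
  rw [← Real.exp_add]
  ring_nf

theorem powSum_le (n m : ℕ) : powSum n m ≤ Real.exp (-m) * (1 - Real.exp (-1))⁻¹ := by
  rw [powSum_eq_sum_one_sub_div_pow]
  calc ∑ k ∈ range (n - m), (1 - (m + 1 + k : ℝ) / n) ^ (n - 1)
      ≤ ∑ k ∈ range (n - m), Real.exp (-m) * Real.exp (-k) := sum_le_sum fun _ hk ↦
        (le_abs_self _).trans (abs_one_sub_div_pow_pred_le_of_mem_range hk)
    _ ≤ Real.exp (-m) * (1 - Real.exp (-1))⁻¹ :=
        sum_le_hasSum _ (fun _ _ ↦ by positivity) (hasSum_exp_neg_nat.mul_left _)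

theorem tendsto_powSum (m : ℕ) :
    Tendsto (powSum · m) atTop (𝓝 (Real.exp (-m) / (Real.exp 1 - 1))) := by
  have h_term (k : ℕ) :
      Real.exp (-(m + 1 + k)) = Real.exp (-(m + 1)) * Real.exp (-k) := by
    rw [← Real.exp_add, ← neg_add]
  have h_value : Real.exp (-(m + 1)) * (1 - Real.exp (-1))⁻¹ =
      Real.exp (-m) / (Real.exp 1 - 1) := by
    rw [neg_add, Real.exp_add, mul_assoc, Real.exp_neg 1, ← mul_inv, mul_sub,
      mul_inv_cancel₀ (Real.exp_ne_zero 1), mul_one, div_eq_mul_inv]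
  rw [← h_value, ← (hasSum_exp_neg_nat.mul_left _).tsum_eq]
  simp only [powSum_eq_sum_one_sub_div_pow, ← h_term]
  exact tendsto_finsetSum_of_dominated_convergence
    (hasSum_exp_neg_nat.mul_left (Real.exp (-m))).summable
    (tendsto_finset_range.comp (tendsto_sub_atTop_nat m))
    (fun k ↦ tendsto_one_sub_div_pow_pred (m + 1 + k))
    (Eventually.of_forall fun _ _ ↦ abs_one_sub_div_pow_pred_le_of_mem_range)

theorem tendsto_sum_powSum_pow {p : ℕ} (hp : p ≠ 0) :
    Tendsto (fun n ↦ ∑ m ∈ range n, powSum n m ^ p) atTop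
      (𝓝 ((1 - Real.exp (-p))⁻¹ / (Real.exp 1 - 1) ^ p)) := by
  have h_geom := hasSum_exp_neg_mul_nat (Nat.cast_pos.2 hp.pos)
  have exp_pow (m : ℕ) : Real.exp (-m) ^ p = Real.exp (-(p * m)) := by
    rw [← Real.exp_nat_mul, mul_neg]
  rw [← (h_geom.div_const _).tsum_eq]
  refine tendsto_finsetSum_of_dominated_convergence
    (h_geom.mul_right ((1 - Real.exp (-1))⁻¹ ^ p)).summable tendsto_finset_range (fun m ↦ ?_)
    (Eventually.of_forall fun n m _ ↦ ?_)
  · rw [← exp_pow, ← div_pow]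
    exact (tendsto_powSum m).pow p
  · rw [Real.norm_of_nonneg (pow_nonneg (powSum_nonneg n m) p), ← exp_pow, ← mul_pow]
    exact pow_le_pow_left₀ (powSum_nonneg n m) (powSum_le n m) p

theorem sum_powSum (n : ℕ) : ∑ m ∈ range n, powSum n m = n * (powSum n 0 - aSeq n) := by
  simp only [powSum, aSeq]
  rw [sum_range_sum_range_sub, Nat.sub_zero, ← sum_sub_distrib, mul_sum]
  refine sum_congr rfl fun j hj ↦ ?_
  have hjn : j < n := mem_range.1 hj
  have hn : (n : ℝ) ≠ 0 := Nat.cast_ne_zero.2 (Nat.ne_zero_of_lt hjn)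
  rw [← pow_sub_one_mul (Nat.ne_zero_of_lt hjn) ((j : ℝ) / n), nsmul_eq_mul, Nat.cast_sub hjn.le]
  field_simp

theorem sum_aSeq_sub_sum_Ico_sq (n : ℕ) :
    ∑ i ∈ range n, (aSeq n - ∑ j ∈ Ico (i + 1) n, ((j : ℝ) / n) ^ (n - 1)) ^ 2 =
      ∑ m ∈ range n, powSum n m ^ 2 - n * (powSum n 0 - aSeq n) ^ 2 := by
  have h_mean : ∑ m ∈ range n, powSum n m = #(range n) * (powSum n 0 - aSeq n) := by
    rw [card_range, sum_powSum]
  have h_var := sum_sub_sq_of_sum_eq_card_mul h_mean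
  rw [card_range] at h_var
  rw [← h_var, ← sum_range_reflect]
  refine sum_congr rfl fun m hm ↦ ?_
  rw [show n - 1 - m + 1 = n - m by have := mem_range.1 hm; omega,
    sum_Ico_eq_sub _ (Nat.sub_le n m)]
  simp only [powSum, Nat.sub_zero]
  ring

theorem tendsto_powSum_zero_sub_aSeq :
    Tendsto (fun n ↦ powSum n 0 - aSeq n) atTop (𝓝 0) := by
  have h := (tendsto_sum_powSum_pow one_ne_zero).div_atTop tendsto_natCast_atTop_atTop
  refine h.congr' ?_
  filter_upwards [eventually_ne_atTop 0] with n hn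
  simp only [pow_one]
  rw [sum_powSum, mul_div_cancel_left₀ _ (Nat.cast_ne_zero.2 hn)]

theorem tendsto_aSeq : Tendsto aSeq atTop (𝓝 (Real.exp 1 - 1)⁻¹) := by
  simpa using (tendsto_powSum 0).sub tendsto_powSum_zero_sub_aSeq

theorem tendsto_sum_aSeq_sub_sum_Ico_sq :
    Tendsto
      (fun n : ℕ ↦ ∑ i ∈ range n, (aSeq n - ∑ j ∈ Ico (i + 1) n, ((j : ℝ) / n) ^ (n - 1)) ^ 2)
      atTop (𝓝 ((1 - Real.exp (-2))⁻¹ / (Real.exp 1 - 1) ^ 2)) := by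
  have h_mean_sq : Tendsto (fun n : ℕ ↦ n * (powSum n 0 - aSeq n) ^ 2) atTop (𝓝 0) := by
    have h := (tendsto_sum_powSum_pow one_ne_zero).mul tendsto_powSum_zero_sub_aSeq
    simpa only [pow_one, sum_powSum, mul_zero, mul_assoc, ← sq] using h
  simpa [sum_aSeq_sub_sum_Ico_sq] using (tendsto_sum_powSum_pow two_ne_zero).sub h_mean_sq

theorem tendsto_cSeq :
    Tendsto cSeq atTop (𝓝 (Real.exp 1 / ((Real.exp 1 - 1) * (Real.exp 1 ^ 2 - 1)))) := by
  have he : 1 < Real.exp 1 := Real.one_lt_exp_iff.2 one_pos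
  have he1 : 0 < Real.exp 1 - 1 := sub_pos.2 he
  have he2 : 0 < Real.exp 1 ^ 2 - 1 := sub_pos.2 (one_lt_pow₀ he two_ne_zero)
  have h_ratio : Tendsto (fun n : ℕ ↦ ((n : ℝ) + 1) / (n - aSeq n)) atTop (𝓝 1) :=
    tendsto_add_div_sub_of_tendsto_atTop tendsto_natCast_atTop_atTop tendsto_const_nhds
      tendsto_aSeq
  have h := h_ratio.mul <| tendsto_sum_aSeq_sub_sum_Ico_sq.div (tendsto_aSeq.const_add 1)
    (by positivity)
  have h_exp : Real.exp (-2) = (Real.exp 1 ^ 2)⁻¹ := by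
    rw [Real.exp_neg, ← Real.exp_nat_mul, Nat.cast_ofNat, mul_one]
  convert h using 2
  · exact mul_div_mul_comm _ _ _ _
  · rw [h_exp]
    field_simp
    ring

theorem exp_one_div_sub_one_mul_sq_sub_one_mem_Icc :
    Real.exp 1 / ((Real.exp 1 - 1) * (Real.exp 1 ^ 2 - 1)) ∈ Set.Icc (0.24 : ℝ) 0.25 := by
  have hl := Real.exp_one_gt_d9
  have hu := Real.exp_one_lt_d9
  have hpos : 0 < (Real.exp 1 - 1) * (Real.exp 1 ^ 2 - 1) :=
    mul_pos (by linarith) (by nlinarith)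
  constructor
  · rw [le_div_iff₀ hpos]
    nlinarith
  · rw [div_le_iff₀ hpos]
    nlinarith

/-- the sequence `(c_n)` converges and its limit `c` satisfies
`0.24 ≤ c ≤ 0.25`.  (In particular, the infinitesimal jackknife systematically
underestimates the variance of the bagged sample maximum of uniform data by roughly a
factor of 4.) -/
theorem cSeq_tendsto_const_in_Icc :
    ∃ c : ℝ, Tendsto cSeq atTop (nhds c) ∧ 0.24 ≤ c ∧ c ≤ 0.25 :=
  ⟨_, tendsto_cSeq, exp_one_div_sub_one_mul_sq_sub_one_mem_Icc⟩
end

section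
/- For each j ∈ {1,…,n}, Cov_*(s*, w_j*) = (k/n)(e_j − s₀), where w_j* = 1{j ∈ S} is the subsampling inclusion indicator. Consequently the pseudo infinitesimal jackknife estimator satisfies ps-IJ_U := Σ_{j=1}^n Cov_*(s*, w_j*)² = (k/n)² Σ_{j=1}^n (e_j − s₀)². -/
open Finset

/-- Evaluation of a symmetric kernel of `k` arguments on the elements of a `k`-subset
(via the order isomorphism; junk value `0` if the subset does not have `k` elements). -/
noncomputable def subVal (n k : ℕ) (x : Fin n → ℝ) (s : (Fin k → ℝ) → ℝ)
    (S : Finset (Fin n)) : ℝ :=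
  if h : S.card = k then s fun i => x ((S.orderIsoOfFin h i : Fin n)) else 0

/-- Expectation over subsampling without replacement: a uniformly random `k`-subset of
`{1, …, n}`. -/
noncomputable def subE (n k : ℕ) (g : Finset (Fin n) → ℝ) : ℝ :=
  ((n.choose k : ℝ))⁻¹ * ∑ S ∈ (univ : Finset (Fin n)).powersetCard k, g S

/-!
Write `P` for the uniform distribution on the `k`-subsets of the sample. For any statistic `f` and
any event `p`, `E[f 1_p] = P(p) E[f | p]`, so the covariance of `f` with the indicator of `p` is
`P(p) (E[f | p] - E[f])`. For the event `j ∈ S` the conditional mean is `e_j`, and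
`P(j ∈ S) = (n-1).choose (k-1) / n.choose k = k / n`.
-/

open scoped BigOperators

section UniformCovariance

variable {Ω : Type*} (s : Finset Ω) (p : Ω → Prop) [DecidablePred p]

section Semifield

variable {K : Type*} [Semifield K] [CharZero K]

lemma expect_boole :
    𝔼 ω ∈ s, (if p ω then 1 else 0 : K) = (#{ω ∈ s | p ω} : K) / #s := by
  rw [expect_eq_sum_div_card, sum_boole]

lemma expect_mul_boole (f : Ω → K) :
    𝔼 ω ∈ s, f ω * (if p ω then 1 else 0) =
      (#{ω ∈ s | p ω} : K) / #s * 𝔼 ω ∈ s with p ω, f ω := by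
  rw [expect_eq_sum_div_card, div_mul_eq_mul_div, card_mul_expect, sum_filter]
  simp only [mul_ite, mul_one, mul_zero]

end Semifield

variable {K : Type*} [Field K] [CharZero K]

/-- The covariance of `f` and `g` under the uniform distribution on the finite set `s`.
Subsampling without replacement is the case where `s` consists of the `k`-subsets of the sample. -/
def expectCov (f g : Ω → K) : K :=
  𝔼 ω ∈ s, f ω * g ω - (𝔼 ω ∈ s, f ω) * 𝔼 ω ∈ s, g ω

lemma expectCov_boole_right (f : Ω → K) :
    expectCov s f (fun ω ↦ if p ω then 1 else 0) =
      (#{ω ∈ s | p ω} : K) / #s * (𝔼 ω ∈ s with p ω, f ω - 𝔼 ω ∈ s, f ω) := by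
  rw [expectCov, expect_mul_boole, expect_boole]
  ring

end UniformCovariance

section Subsampling

variable {α : Type*} [DecidableEq α] {A : Finset α} {k : ℕ} {j : α}

lemma card_filter_mem_powersetCard (hk : 1 ≤ k) (hj : j ∈ A) :
    #{S ∈ A.powersetCard k | j ∈ S} = (#A - 1).choose (k - 1) := by
  simpa only [singleton_subset_iff, card_singleton] using
    card_filter_powersetCard_subset {j} A k (singleton_subset_iff.2 hj) (by simpa using hk)

section Semifield

variable {K : Type*} [Semifield K] [CharZero K]

lemma card_filter_mem_powersetCard_div_card (hk : 1 ≤ k) (hkA : k ≤ #A) (hj : j ∈ A) :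
    (#{S ∈ A.powersetCard k | j ∈ S} : K) / #(A.powersetCard k) = (k : K) / #A := by
  have choose_ne_zero : ((#A).choose k : K) ≠ 0 := mod_cast (Nat.choose_pos hkA).ne'
  have card_ne_zero : (#A : K) ≠ 0 := mod_cast (Nat.lt_of_lt_of_le hk hkA).ne'
  have absorption : #A * (#A - 1).choose (k - 1) = (#A).choose k * k := by
    simpa only [Nat.sub_add_cancel hk, Nat.sub_add_cancel (hk.trans hkA)] using
      Nat.add_one_mul_choose_eq (#A - 1) (k - 1)
  rw [card_filter_mem_powersetCard hk hj, card_powersetCard,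
    div_eq_div_iff choose_ne_zero card_ne_zero, mul_comm, mul_comm (k : K)]
  exact_mod_cast absorption

lemma expect_filter_mem_powersetCard (hk : 1 ≤ k) (hj : j ∈ A) (f : Finset α → K) :
    𝔼 S ∈ A.powersetCard k with j ∈ S, f S =
      ((#A - 1).choose (k - 1) : K)⁻¹ * ∑ S ∈ A.powersetCard k with j ∈ S, f S := by
  rw [expect_eq_sum_div_card, card_filter_mem_powersetCard hk hj, div_eq_inv_mul]

end Semifield

variable {K : Type*} [Field K] [CharZero K]

lemma expectCov_powersetCard_mem (hk : 1 ≤ k) (hkA : k ≤ #A) (hj : j ∈ A) (f : Finset α → K) :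
    expectCov (A.powersetCard k) f (fun S ↦ if j ∈ S then 1 else 0) =
      (k : K) / #A *
        (𝔼 S ∈ A.powersetCard k with j ∈ S, f S - 𝔼 S ∈ A.powersetCard k, f S) := by
  rw [expectCov_boole_right, card_filter_mem_powersetCard_div_card hk hkA hj]

theorem pseudo_IJ_subsampling_covariance_general (hk : 1 ≤ k) (hkA : k ≤ #A) (f : Finset α → K)
    (e : α → K)
    (he : ∀ j ∈ A, e j =
      ((#A - 1).choose (k - 1) : K)⁻¹ * ∑ S ∈ A.powersetCard k with j ∈ S, f S) :
    (∀ j ∈ A, expectCov (A.powersetCard k) f (fun S ↦ if j ∈ S then 1 else 0) =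
      (k : K) / #A * (e j - 𝔼 S ∈ A.powersetCard k, f S)) ∧
    ∑ j ∈ A, expectCov (A.powersetCard k) f (fun S ↦ if j ∈ S then 1 else 0) ^ 2 =
      ((k : K) / #A) ^ 2 * ∑ j ∈ A, (e j - 𝔼 S ∈ A.powersetCard k, f S) ^ 2 := by
  have cov_eq : ∀ j ∈ A, expectCov (A.powersetCard k) f (fun S ↦ if j ∈ S then 1 else 0) =
      (k : K) / #A * (e j - 𝔼 S ∈ A.powersetCard k, f S) := fun j hj ↦ by
    rw [expectCov_powersetCard_mem hk hkA hj, expect_filter_mem_powersetCard hk hj, he j hj]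
  refine ⟨cov_eq, ?_⟩
  rw [mul_sum]
  exact sum_congr rfl fun j hj ↦ by rw [cov_eq j hj, mul_pow]

end Subsampling

lemma subE_eq_expect (n k : ℕ) (g : Finset (Fin n) → ℝ) :
    subE n k g = 𝔼 S ∈ (univ : Finset (Fin n)).powersetCard k, g S := by
  rw [subE, expect_eq_sum_div_card, card_powersetCard, card_fin, div_eq_inv_mul]

/-- for subsampling without replacement, for every `j`,
`Cov_*(s*, w_j*) = (k/n)(e_j − s₀)` where `w_j* = 1{j ∈ S}`; consequently
`ps-IJ_U = Σ_j Cov_*(s*, w_j*)² = (k/n)² Σ_j (e_j − s₀)²`. -/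
theorem pseudo_IJ_subsampling_covariance
    (n k : ℕ) (hk : 1 ≤ k) (hkn : k ≤ n)
    (x : Fin n → ℝ)
    (s : (Fin k → ℝ) → ℝ)
    (hsym : ∀ (π : Equiv.Perm (Fin k)) (v : Fin k → ℝ), s (v ∘ π) = s v)
    (s0 : ℝ) (hs0 : s0 = subE n k (subVal n k x s))
    (e : Fin n → ℝ)
    (he : ∀ j, e j = (((n - 1).choose (k - 1) : ℝ))⁻¹ *
      ∑ S ∈ ((univ : Finset (Fin n)).powersetCard k).filter fun S => j ∈ S,
        subVal n k x s S) :
    (∀ j : Fin n,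
      subE n k (fun S => subVal n k x s S * (if j ∈ S then (1 : ℝ) else 0))
          - s0 * subE n k (fun S => if j ∈ S then (1 : ℝ) else 0)
        = ((k : ℝ) / n) * (e j - s0)) ∧
    (∑ j : Fin n,
        (subE n k (fun S => subVal n k x s S * (if j ∈ S then (1 : ℝ) else 0))
          - s0 * subE n k (fun S => if j ∈ S then (1 : ℝ) else 0)) ^ 2)
      = ((k : ℝ) / n) ^ 2 * ∑ j : Fin n, (e j - s0) ^ 2 := by
  simpa only [subE_eq_expect, expectCov, hs0, card_fin, mem_univ, true_implies] using
    pseudo_IJ_subsampling_covariance_general (A := univ) hk (by rwa [card_fin])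
      (subVal n k x s) e (by simpa only [card_fin] using fun j _ ↦ he j)
end

section
/- For distinct indices i ≠ j, define w_{ij}* = w_i* w_j* − ((k−1)/(n−1))(w_i* + w_j*) + k(k−1)/(n(n−1)), where w_i* = 1{i ∈ S}. Then E_*[w_{ij}*] = 0 and Cov_*(s*, w_{ij}*) = (C(k,2)/C(n,2)) · (e_{ij} − e_i − e_j + s₀). Consequently the second-order pseudo infinitesimal jackknife satisfies ps-IJ_U(2) := Σ_{i≠j} Cov_*(s*, w_{ij}*)² = (C(k,2)/C(n,2))² Σ_{i≠j} (e_{ij} − e_i − e_j + s₀)². -/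
open Finset

/-- The inclusion indicator `w_i* = 1{i ∈ S}`. -/
noncomputable def wInd (n : ℕ) (i : Fin n) (S : Finset (Fin n)) : ℝ :=
  if i ∈ S then 1 else 0

/-- The second-order weight
`w_{ij}* = w_i* w_j* − ((k−1)/(n−1))(w_i* + w_j*) + k(k−1)/(n(n−1))`. -/
noncomputable def wInd2 (n k : ℕ) (i j : Fin n) (S : Finset (Fin n)) : ℝ :=
  wInd n i S * wInd n j S - (((k : ℝ) - 1) / ((n : ℝ) - 1)) * (wInd n i S + wInd n j S)
    + (k : ℝ) * ((k : ℝ) - 1) / ((n : ℝ) * ((n : ℝ) - 1))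

/-- Covariance with respect to the subsampling. -/
noncomputable def subCov (n k : ℕ) (f g : Finset (Fin n) → ℝ) : ℝ :=
  subE n k (fun S => f S * g S) - subE n k f * subE n k g

/-!
For a set `T` of `t` indices, `∏ i ∈ T, w_i*` is the indicator of `T ⊆ S`, an event of probability
`C(k,t)/C(n,t)`, so `E_*[s* ∏ i ∈ T, w_i*]` is that probability times the expectation of `s*`
conditional on `T ⊆ S`. The coefficients of `w_{ij}*` are such that, after expanding
`E_*[s* w_{ij}*]`, every term carries the probability `C(k,2)/C(n,2)` of including a pair: it equals
both `(k−1)/(n−1) · k/n` and the constant term. For a constant `s*` all the conditional expectations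
agree and cancel, so `w_{ij}*` is centred and the covariance is `E_*[s* w_{ij}*]`.
-/

/-- The expectation of `f S` conditional on `T ⊆ S`, with junk value `0` unless `#T ≤ k ≤ n`. For
`i ≠ j`, the paper's `e_i` and `e_{ij}` are the cases `T = {i}` and `T = {i, j}`. -/
noncomputable def subCondE (n k : ℕ) (T : Finset (Fin n)) (f : Finset (Fin n) → ℝ) : ℝ :=
  ((n - #T).choose (k - #T) : ℝ)⁻¹ * ∑ S ∈ (univ : Finset (Fin n)).powersetCard k with T ⊆ S, f S

lemma choose_sub_sub_ne_zero {n k : ℕ} (hkn : k ≤ n) (t : ℕ) : (n - t).choose (k - t) ≠ 0 :=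
  (Nat.choose_pos (Nat.sub_le_sub_right hkn t)).ne'

lemma choose_sub_sub_div_choose {K : Type*} [Field K] [CharZero K] {n k t : ℕ}
    (htk : t ≤ k) (hkn : k ≤ n) :
    ((n - t).choose (k - t) : K) / n.choose k = k.choose t / n.choose t := by
  have hnk : (n.choose k : K) ≠ 0 := mod_cast (Nat.choose_pos hkn).ne'
  have hnt : (n.choose t : K) ≠ 0 := mod_cast (Nat.choose_pos (htk.trans hkn)).ne'
  rw [div_eq_div_iff hnk hnt, mul_comm, mul_comm (k.choose t : K)]
  exact mod_cast (Nat.choose_mul htk).symm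

lemma choose_two_div_choose_two (K : Type*) [Field K] [CharZero K] (n k : ℕ) :
    (k.choose 2 : K) / n.choose 2 = k * (k - 1) / (n * (n - 1)) := by
  rw [Nat.cast_choose_two, Nat.cast_choose_two, div_div_div_cancel_right₀ two_ne_zero]

section Subsampling

variable {n k : ℕ} {T : Finset (Fin n)} {i j : Fin n}

lemma subE_add (f g : Finset (Fin n) → ℝ) :
    subE n k (fun S ↦ f S + g S) = subE n k f + subE n k g := by
  simp only [subE, sum_add_distrib, mul_add]

lemma subE_sub (f g : Finset (Fin n) → ℝ) :
    subE n k (fun S ↦ f S - g S) = subE n k f - subE n k g := by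
  simp only [subE, sum_sub_distrib, mul_sub]

lemma subE_const_mul (c : ℝ) (f : Finset (Fin n) → ℝ) :
    subE n k (fun S ↦ c * f S) = c * subE n k f := by
  simp only [subE, ← mul_sum, mul_left_comm]

lemma subCondE_empty (f : Finset (Fin n) → ℝ) : subCondE n k ∅ f = subE n k f := by
  simp [subCondE, subE]

lemma subCondE_singleton (i : Fin n) (f : Finset (Fin n) → ℝ) :
    subCondE n k {i} f = ((n - 1).choose (k - 1) : ℝ)⁻¹ *
      ∑ S ∈ (univ : Finset (Fin n)).powersetCard k with i ∈ S, f S := by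
  simp only [subCondE, card_singleton, singleton_subset_iff]

lemma subCondE_pair (hij : i ≠ j) (f : Finset (Fin n) → ℝ) :
    subCondE n k {i, j} f = ((n - 2).choose (k - 2) : ℝ)⁻¹ *
      ∑ S ∈ (univ : Finset (Fin n)).powersetCard k with i ∈ S ∧ j ∈ S, f S := by
  simp only [subCondE, card_pair hij, insert_subset_iff, singleton_subset_iff]

lemma subCondE_const (hTk : #T ≤ k) (hkn : k ≤ n) (c : ℝ) :
    subCondE n k T (fun _ ↦ c) = c := by
  have hcard : #{S ∈ (univ : Finset (Fin n)).powersetCard k | T ⊆ S} =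
      (n - #T).choose (k - #T) := by
    simpa using card_filter_powersetCard_subset T univ k (subset_univ T) hTk
  have hchoose : ((n - #T).choose (k - #T) : ℝ) ≠ 0 := mod_cast choose_sub_sub_ne_zero hkn #T
  rw [subCondE, sum_const, hcard, nsmul_eq_mul, inv_mul_cancel_left₀ hchoose]

lemma subE_const (hkn : k ≤ n) (c : ℝ) : subE n k (fun _ ↦ c) = c := by
  rw [← subCondE_empty, subCondE_const (Nat.zero_le k) hkn]

lemma prod_wInd (T S : Finset (Fin n)) :
    ∏ i ∈ T, wInd n i S = if T ⊆ S then 1 else 0 := by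
  simp only [wInd, prod_ite_zero, prod_const_one, subset_iff]

lemma subE_mul_prod_wInd (hTk : #T ≤ k) (hkn : k ≤ n) (f : Finset (Fin n) → ℝ) :
    subE n k (fun S ↦ f S * ∏ i ∈ T, wInd n i S) =
      (k.choose #T : ℝ) / n.choose #T * subCondE n k T f := by
  have hchoose : ((n - #T).choose (k - #T) : ℝ) ≠ 0 := mod_cast choose_sub_sub_ne_zero hkn #T
  simp only [subE, subCondE, prod_wInd, mul_ite, mul_one, mul_zero, ← sum_filter,
    ← choose_sub_sub_div_choose hTk hkn]
  field_simp

lemma subE_mul_wInd (hk : 1 ≤ k) (hkn : k ≤ n) (f : Finset (Fin n) → ℝ) (i : Fin n) :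
    subE n k (fun S ↦ f S * wInd n i S) = (k : ℝ) / n * subCondE n k {i} f := by
  simpa using subE_mul_prod_wInd (T := {i}) (by simpa using hk) hkn f

lemma subE_mul_wInd_mul_wInd (hk : 2 ≤ k) (hkn : k ≤ n) (f : Finset (Fin n) → ℝ) (hij : i ≠ j) :
    subE n k (fun S ↦ f S * (wInd n i S * wInd n j S)) =
      (k.choose 2 : ℝ) / n.choose 2 * subCondE n k {i, j} f := by
  simpa only [prod_pair hij, card_pair hij] using
    subE_mul_prod_wInd (T := {i, j}) (by rwa [card_pair hij]) hkn f

lemma subE_mul_wInd2 (hk : 2 ≤ k) (hkn : k ≤ n) (f : Finset (Fin n) → ℝ) (hij : i ≠ j) :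
    subE n k (fun S ↦ f S * wInd2 n k i j S) =
      (k.choose 2 : ℝ) / n.choose 2 *
        (subCondE n k {i, j} f - subCondE n k {i} f - subCondE n k {j} f + subE n k f) := by
  have hk₁ : 1 ≤ k := one_le_two.trans hk
  set a : ℝ := ((k : ℝ) - 1) / (n - 1)
  set p : ℝ := (k.choose 2 : ℝ) / n.choose 2 with hp
  have hap : a * (k / n) = p := by
    rw [hp, choose_two_div_choose_two, div_mul_div_comm, mul_comm, mul_comm (n : ℝ)]
  calc subE n k (fun S ↦ f S * wInd2 n k i j S)
    _ = subE n k (fun S ↦ f S * (wInd n i S * wInd n j S)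
          - a * (f S * wInd n i S + f S * wInd n j S) + p * f S) := by
      congr 1 with S
      rw [wInd2, hp, choose_two_div_choose_two]
      ring
    _ = p * subCondE n k {i, j} f
          - a * (k / n * subCondE n k {i} f + k / n * subCondE n k {j} f) + p * subE n k f := by
      rw [subE_add, subE_sub, subE_const_mul, subE_const_mul, subE_add,
        subE_mul_wInd_mul_wInd hk hkn f hij, subE_mul_wInd hk₁ hkn, subE_mul_wInd hk₁ hkn]
    _ = p * (subCondE n k {i, j} f - subCondE n k {i} f - subCondE n k {j} f + subE n k f) := by
      rw [← hap]
      ring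

lemma subE_wInd2 (hk : 2 ≤ k) (hkn : k ≤ n) (hij : i ≠ j) : subE n k (wInd2 n k i j) = 0 := by
  have hi (i : Fin n) : #{i} ≤ k := one_le_two.trans hk
  have hpair : #{i, j} ≤ k := card_le_two.trans hk
  calc subE n k (wInd2 n k i j)
    _ = subE n k (fun S ↦ 1 * wInd2 n k i j S) := by simp only [one_mul]
    _ = (k.choose 2 : ℝ) / n.choose 2 * (1 - 1 - 1 + 1) := by
      rw [subE_mul_wInd2 hk hkn _ hij, subCondE_const hpair hkn, subCondE_const (hi i) hkn,
        subCondE_const (hi j) hkn, subE_const hkn]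
    _ = 0 := by ring

lemma subCov_wInd2 (hk : 2 ≤ k) (hkn : k ≤ n) (f : Finset (Fin n) → ℝ) (hij : i ≠ j) :
    subCov n k f (wInd2 n k i j) =
      (k.choose 2 : ℝ) / n.choose 2 *
        (subCondE n k {i, j} f - subCondE n k {i} f - subCondE n k {j} f + subE n k f) := by
  rw [subCov, subE_wInd2 hk hkn hij, mul_zero, sub_zero, subE_mul_wInd2 hk hkn f hij]

theorem second_order_pseudo_IJ_subsampling_general (hk : 2 ≤ k) (hkn : k ≤ n)
    (f : Finset (Fin n) → ℝ) (e : Fin n → ℝ) (he : ∀ i, e i = subCondE n k {i} f)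
    (e2 : Fin n → Fin n → ℝ) (he2 : ∀ i j, i ≠ j → e2 i j = subCondE n k {i, j} f) :
    (∀ i j : Fin n, i ≠ j → subE n k (wInd2 n k i j) = 0) ∧
    (∀ i j : Fin n, i ≠ j → subCov n k f (wInd2 n k i j) =
      (k.choose 2 : ℝ) / n.choose 2 * (e2 i j - e i - e j + subE n k f)) ∧
    ∑ p : Fin n × Fin n with p.1 ≠ p.2, subCov n k f (wInd2 n k p.1 p.2) ^ 2 =
      ((k.choose 2 : ℝ) / n.choose 2) ^ 2 *
        ∑ p : Fin n × Fin n with p.1 ≠ p.2, (e2 p.1 p.2 - e p.1 - e p.2 + subE n k f) ^ 2 := by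
  have hcov (i j : Fin n) (hij : i ≠ j) : subCov n k f (wInd2 n k i j) =
      (k.choose 2 : ℝ) / n.choose 2 * (e2 i j - e i - e j + subE n k f) := by
    rw [he2 i j hij, he, he, subCov_wInd2 hk hkn f hij]
  refine ⟨fun i j ↦ subE_wInd2 hk hkn, hcov, ?_⟩
  rw [mul_sum]
  refine sum_congr rfl fun p hp ↦ ?_
  rw [hcov _ _ (mem_filter.mp hp).2, mul_pow]

end Subsampling

/-- for distinct `i ≠ j`, `E_*[w_{ij}*] = 0` and
`Cov_*(s*, w_{ij}*) = (C(k,2)/C(n,2))(e_{ij} − e_i − e_j + s₀)`; consequently the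
second-order pseudo infinitesimal jackknife satisfies
`ps-IJ_U(2) = Σ_{i≠j} Cov_*(s*, w_{ij}*)² = (C(k,2)/C(n,2))² Σ_{i≠j} (e_{ij} − e_i − e_j + s₀)²`. -/
theorem second_order_pseudo_IJ_subsampling
    (n k : ℕ) (hk : 2 ≤ k) (hkn : k ≤ n)
    (x : Fin n → ℝ)
    (s : (Fin k → ℝ) → ℝ)
    (hsym : ∀ (π : Equiv.Perm (Fin k)) (v : Fin k → ℝ), s (v ∘ π) = s v)
    (s0 : ℝ) (hs0 : s0 = subE n k (subVal n k x s))
    (e : Fin n → ℝ)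
    (he : ∀ i, e i = (((n - 1).choose (k - 1) : ℝ))⁻¹ *
      ∑ S ∈ ((univ : Finset (Fin n)).powersetCard k).filter fun S => i ∈ S,
        subVal n k x s S)
    (e2 : Fin n → Fin n → ℝ)
    (he2 : ∀ i j, e2 i j = (((n - 2).choose (k - 2) : ℝ))⁻¹ *
      ∑ S ∈ ((univ : Finset (Fin n)).powersetCard k).filter fun S => i ∈ S ∧ j ∈ S,
        subVal n k x s S) :
    (∀ i j : Fin n, i ≠ j → subE n k (wInd2 n k i j) = 0) ∧
    (∀ i j : Fin n, i ≠ j →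
      subCov n k (subVal n k x s) (wInd2 n k i j)
        = ((k.choose 2 : ℝ) / (n.choose 2 : ℝ)) * (e2 i j - e i - e j + s0)) ∧
    (∑ p ∈ (univ : Finset (Fin n × Fin n)).filter fun p => p.1 ≠ p.2,
        (subCov n k (subVal n k x s) (wInd2 n k p.1 p.2)) ^ 2)
      = ((k.choose 2 : ℝ) / (n.choose 2 : ℝ)) ^ 2 *
          ∑ p ∈ (univ : Finset (Fin n × Fin n)).filter fun p => p.1 ≠ p.2,
            (e2 p.1 p.2 - e p.1 - e p.2 + s0) ^ 2 := by
  subst hs0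
  exact second_order_pseudo_IJ_subsampling_general hk hkn (subVal n k x s)
    e (fun i ↦ (he i).trans (subCondE_singleton i _).symm)
    e2 (fun i j hij ↦ (he2 i j).trans (subCondE_pair hij _).symm)
end

section
/- One has p₀(1) = p₁(1) = C(n,k)⁻¹ =: p, and the derivatives at ε = 0 of the perturbed subsampling probabilities satisfy (d/dε) p₀(1−ε)|_{ε=0} = p · (−k − Σ_{j=0}^{k−1} j/(n−j)) and (d/dε) p₁(1−ε)|_{ε=0} = p · (n − (k+1)/2 − (1/k) Σ_{j=0}^{k−1} j(k−j)/(n−j)). -/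
open Finset

/-- `p₀(δ) = k! ∏_{j=0}^{k−1} δ/(n−jδ)`: the probability of producing a given `k`-subset
not containing the distinguished index, under the `δ`-perturbed sequential subsampling. -/
noncomputable def pZero (n k : ℕ) (δ : ℝ) : ℝ :=
  (k.factorial : ℝ) * ∏ j ∈ range k, δ / ((n : ℝ) - (j : ℝ) * δ)

/-- `p₁(δ)`: the probability of producing a given `k`-subset containing the distinguished
index, under the `δ`-perturbed sequential subsampling. -/
noncomputable def pOne (n k : ℕ) (δ : ℝ) : ℝ :=
  ((k - 1).factorial : ℝ) *
    ∑ i ∈ range k,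
      (∏ j ∈ range i, δ / ((n : ℝ) - (j : ℝ) * δ)) *
        (((n : ℝ) - ((n : ℝ) - 1) * δ) / ((n : ℝ) - (i : ℝ) * δ)) *
        ∏ j ∈ Finset.Ico (i + 1) k, 1 / ((n : ℝ) - (j : ℝ))

/-! Count draws from `0`. At `δ = 1` every ordered draw of `k` distinct points has probability
`(n.descFactorial k)⁻¹`, so each derivative there is this common value times a logarithmic
derivative, to which the successive draws contribute additively: `1 + j / (n - j)` for drawing an
ordinary point in step `j`, `1 - n + i / (n - i)` for drawing the distinguished point in step `i`,
and `0` afterwards, since the remaining masses are then uniform. Summing over the position `i` of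
the distinguished point counts `j / (n - j)` once for each `i` with `j ≤ i < k`, which is the origin
of the factor `k - j`. -/

section LogarithmicDerivative

variable {𝕜 : Type*} [NontriviallyNormedField 𝕜] {x : 𝕜}

lemma hasDerivAt_prod_of_logDeriv {ι : Type*} {s : Finset ι} {f : ι → 𝕜 → 𝕜} {l : ι → 𝕜}
    (hf : ∀ i ∈ s, HasDerivAt (f i) (f i x * l i) x) :
    HasDerivAt (fun y ↦ ∏ i ∈ s, f i y) ((∏ i ∈ s, f i x) * ∑ i ∈ s, l i) x := by
  classical
  refine (HasDerivAt.fun_finsetProd hf).congr_deriv ?_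
  rw [mul_sum]
  refine sum_congr rfl fun i hi ↦ ?_
  rw [smul_eq_mul, ← mul_assoc, prod_erase_mul _ _ hi]

lemma hasDerivAt_div_sub_mul_of_logDeriv {u : 𝕜 → 𝕜} {l a c : 𝕜}
    (hu : HasDerivAt u (u x * l) x) (hx : a - c * x ≠ 0) :
    HasDerivAt (fun y ↦ u y / (a - c * y)) (u x / (a - c * x) * (l + c / (a - c * x))) x := by
  have hden : HasDerivAt (fun y ↦ a - c * y) (-c) x := by
    simpa using ((hasDerivAt_id x).const_mul c).const_sub a
  refine (hu.fun_div hden hx).congr_deriv ?_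
  field_simp
  ring

end LogarithmicDerivative

section Sums

lemma sum_range_sum_range_succ {R : Type*} [Ring R] (f : ℕ → R) (k : ℕ) :
    ∑ i ∈ range k, ∑ j ∈ range (i + 1), f j = ∑ j ∈ range k, ((k : R) - j) * f j := by
  induction k with
  | zero => simp
  | succ k ih =>
    have hsplit : ∀ j ∈ range (k + 1),
        (((k + 1 : ℕ) : R) - j) * f j = ((k : R) - j) * f j + f j := fun j _ ↦ by
      push_cast
      noncomm_ring
    rw [sum_range_succ, ih, sum_congr rfl hsplit, sum_add_distrib,
      sum_range_succ fun j ↦ ((k : R) - j) * f j, sub_self, zero_mul, add_zero]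

lemma sum_range_cast_add_one {K : Type*} [Field K] [CharZero K] (k : ℕ) :
    ∑ i ∈ range k, ((i : K) + 1) = k * (k + 1) / 2 := by
  induction k with
  | zero => simp
  | succ k ih =>
    rw [sum_range_succ, ih]
    push_cast
    ring

end Sums

-- For `n < k` both sides are `0`, because the product contains the factor `1 / 0 = 0`.
lemma prod_range_one_div_sub_eq_inv_descFactorial {K : Type*} [Field K] (n k : ℕ) :
    ∏ j ∈ range k, 1 / ((n : K) - j) = (n.descFactorial k : K)⁻¹ := by
  simp only [one_div, prod_inv_distrib, ← descPochhammer_eval_eq_prod_range,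
    descPochhammer_eval_eq_descFactorial]

lemma factorial_mul_inv_descFactorial {K : Type*} [Field K] [CharZero K] (n k : ℕ) :
    (k.factorial : K) * (n.descFactorial k : K)⁻¹ = (n.choose k : K)⁻¹ := by
  have hk : (k.factorial : K) ≠ 0 := mod_cast k.factorial_ne_zero
  rw [Nat.descFactorial_eq_factorial_mul_choose, Nat.cast_mul, mul_inv,
    mul_inv_cancel_left₀ hk]

lemma factorial_pred_mul_inv_descFactorial {K : Type*} [Field K] [CharZero K] (n : ℕ) {k : ℕ}
    (hk : k ≠ 0) :
    ((k - 1).factorial : K) * (n.descFactorial k : K)⁻¹ = (n.choose k : K)⁻¹ * (k : K)⁻¹ := by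
  have hk' : (k : K) ≠ 0 := mod_cast hk
  rw [← factorial_mul_inv_descFactorial, ← Nat.mul_factorial_pred hk, Nat.cast_mul]
  field_simp

lemma natCast_sub_natCast_ne_zero {R : Type*} [AddGroupWithOne R] [CharZero R] {n j : ℕ}
    (hj : j < n) : (n : R) - j ≠ 0 :=
  sub_ne_zero.2 (mod_cast hj.ne')

/-- The probability that the first `m` draws produce a prescribed sequence of distinct
points, none of which is the distinguished one. -/
noncomputable def avoidingDrawProb (n m : ℕ) (δ : ℝ) : ℝ :=
  ∏ j ∈ range m, δ / ((n : ℝ) - (j : ℝ) * δ)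

/-- The probability that `k` draws produce a prescribed sequence of distinct points whose
entry with index `i`, counted from `0`, is the distinguished one. -/
noncomputable def hittingDrawProb (n k i : ℕ) (δ : ℝ) : ℝ :=
  avoidingDrawProb n i δ * (((n : ℝ) - ((n : ℝ) - 1) * δ) / ((n : ℝ) - (i : ℝ) * δ)) *
    ∏ j ∈ Ico (i + 1) k, 1 / ((n : ℝ) - (j : ℝ))

lemma pZero_eq_factorial_mul_avoidingDrawProb (n k : ℕ) (δ : ℝ) :
    pZero n k δ = k.factorial * avoidingDrawProb n k δ := rfl

lemma pOne_eq_factorial_mul_sum_hittingDrawProb (n k : ℕ) (δ : ℝ) :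
    pOne n k δ = (k - 1).factorial * ∑ i ∈ range k, hittingDrawProb n k i δ := rfl

lemma avoidingDrawProb_one (n m : ℕ) : avoidingDrawProb n m 1 = (n.descFactorial m : ℝ)⁻¹ := by
  simp only [avoidingDrawProb, mul_one, prod_range_one_div_sub_eq_inv_descFactorial]

lemma hittingDrawProb_one (n : ℕ) {k i : ℕ} (hi : i < k) :
    hittingDrawProb n k i 1 = (n.descFactorial k : ℝ)⁻¹ := by
  simp only [hittingDrawProb, avoidingDrawProb, mul_one, sub_sub_cancel]
  rw [← prod_range_succ (fun j : ℕ ↦ 1 / ((n : ℝ) - j)), prod_range_mul_prod_Ico _ hi,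
    prod_range_one_div_sub_eq_inv_descFactorial]

lemma hasDerivAt_avoidingDrawProb_one {n m : ℕ} (hm : m ≤ n) :
    HasDerivAt (avoidingDrawProb n m)
      (avoidingDrawProb n m 1 * (m + ∑ j ∈ range m, (j : ℝ) / ((n : ℝ) - j))) 1 := by
  have hfactor : ∀ j ∈ range m, HasDerivAt (fun δ : ℝ ↦ δ / ((n : ℝ) - j * δ))
      (1 / ((n : ℝ) - j * 1) * (1 + j / ((n : ℝ) - j * 1))) 1 := fun j hj ↦
    hasDerivAt_div_sub_mul_of_logDeriv (u := fun δ ↦ δ) (by simpa using hasDerivAt_id' (1 : ℝ))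
      (by simpa using natCast_sub_natCast_ne_zero ((mem_range.1 hj).trans_le hm))
  refine (hasDerivAt_prod_of_logDeriv hfactor).congr_deriv ?_
  simp only [avoidingDrawProb, mul_one, sum_add_distrib, sum_const, card_range, nsmul_eq_mul]

lemma hasDerivAt_hittingDrawProb_one {n k i : ℕ} (hi : i < n) :
    HasDerivAt (hittingDrawProb n k i) (hittingDrawProb n k i 1 *
      ((i : ℝ) + 1 - n + ∑ j ∈ range (i + 1), (j : ℝ) / ((n : ℝ) - j))) 1 := by
  have hmass : HasDerivAt (fun δ : ℝ ↦ (n : ℝ) - ((n : ℝ) - 1) * δ)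
      (((n : ℝ) - ((n : ℝ) - 1) * 1) * (1 - n)) 1 := by
    simpa using ((hasDerivAt_id (1 : ℝ)).const_mul ((n : ℝ) - 1)).const_sub (n : ℝ)
  have hdraw := hasDerivAt_div_sub_mul_of_logDeriv (c := (i : ℝ)) hmass
    (by simpa using natCast_sub_natCast_ne_zero hi)
  refine (((hasDerivAt_avoidingDrawProb_one hi.le).mul hdraw).mul_const
    (∏ j ∈ Ico (i + 1) k, 1 / ((n : ℝ) - j))).congr_deriv ?_
  rw [hittingDrawProb, sum_range_succ]
  ring

lemma pZero_one (n k : ℕ) : pZero n k 1 = (n.choose k : ℝ)⁻¹ := by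
  rw [pZero_eq_factorial_mul_avoidingDrawProb, avoidingDrawProb_one,
    factorial_mul_inv_descFactorial]

lemma pOne_one (n : ℕ) {k : ℕ} (hk : k ≠ 0) : pOne n k 1 = (n.choose k : ℝ)⁻¹ := by
  have hk' : (k : ℝ) ≠ 0 := mod_cast hk
  rw [pOne_eq_factorial_mul_sum_hittingDrawProb,
    sum_congr rfl fun i hi ↦ hittingDrawProb_one n (mem_range.1 hi), sum_const, card_range,
    nsmul_eq_mul, mul_left_comm, factorial_pred_mul_inv_descFactorial n hk]
  field_simp

lemma hasDerivAt_pZero_one {n k : ℕ} (hkn : k ≤ n) :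
    HasDerivAt (pZero n k)
      ((n.choose k : ℝ)⁻¹ * (k + ∑ j ∈ range k, (j : ℝ) / ((n : ℝ) - j))) 1 := by
  rw [← pZero_one, pZero_eq_factorial_mul_avoidingDrawProb, mul_assoc]
  exact (hasDerivAt_avoidingDrawProb_one hkn).const_mul _

lemma sum_logDeriv_hittingDrawProb_one (n k : ℕ) :
    ∑ i ∈ range k, ((i : ℝ) + 1 - n + ∑ j ∈ range (i + 1), (j : ℝ) / ((n : ℝ) - j)) =
      k * (((k : ℝ) + 1) / 2 - n) + ∑ j ∈ range k, (j : ℝ) * ((k : ℝ) - j) / ((n : ℝ) - j) := by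
  have hweight : ∀ j ∈ range k,
      ((k : ℝ) - j) * (j / ((n : ℝ) - j)) = j * ((k : ℝ) - j) / ((n : ℝ) - j) :=
    fun j _ ↦ by ring
  rw [sum_add_distrib, sum_sub_distrib, sum_range_cast_add_one, sum_const, card_range,
    nsmul_eq_mul, sum_range_sum_range_succ, sum_congr rfl hweight]
  ring

lemma hasDerivAt_pOne_one {n k : ℕ} (hk : k ≠ 0) (hkn : k ≤ n) :
    HasDerivAt (pOne n k)
      ((n.choose k : ℝ)⁻¹ * (((k : ℝ) + 1) / 2 - n +
        (k : ℝ)⁻¹ * ∑ j ∈ range k, (j : ℝ) * ((k : ℝ) - j) / ((n : ℝ) - j))) 1 := by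
  have hk' : (k : ℝ) ≠ 0 := mod_cast hk
  have hterm : ∀ i ∈ range k, HasDerivAt (hittingDrawProb n k i) ((n.descFactorial k : ℝ)⁻¹ *
      ((i : ℝ) + 1 - n + ∑ j ∈ range (i + 1), (j : ℝ) / ((n : ℝ) - j))) 1 := fun i hi ↦ by
    have hik := mem_range.1 hi
    simpa only [hittingDrawProb_one n hik] using
      hasDerivAt_hittingDrawProb_one (k := k) (hik.trans_le hkn)
  refine ((HasDerivAt.fun_sum hterm).const_mul ((k - 1).factorial : ℝ)).congr_deriv ?_
  rw [← mul_sum, sum_logDeriv_hittingDrawProb_one, ← mul_assoc,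
    factorial_pred_mul_inv_descFactorial n hk]
  field_simp

/-- `p₀(1) = p₁(1) = C(n,k)⁻¹ = p`, and the derivatives at `ε = 0` of the
perturbed subsampling probabilities satisfy
`(d/dε) p₀(1−ε)|₀ = p(−k − Σ_{j=0}^{k−1} j/(n−j))` and
`(d/dε) p₁(1−ε)|₀ = p(n − (k+1)/2 − (1/k) Σ_{j=0}^{k−1} j(k−j)/(n−j))`. -/
theorem perturbed_subsampling_probabilities_derivatives
    (n k : ℕ) (hk : 1 ≤ k) (hkn : k < n) :
    pZero n k 1 = ((n.choose k : ℝ))⁻¹ ∧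
    pOne n k 1 = ((n.choose k : ℝ))⁻¹ ∧
    HasDerivAt (fun ε : ℝ => pZero n k (1 - ε))
      (((n.choose k : ℝ))⁻¹ *
        (-(k : ℝ) - ∑ j ∈ range k, (j : ℝ) / ((n : ℝ) - (j : ℝ)))) 0 ∧
    HasDerivAt (fun ε : ℝ => pOne n k (1 - ε))
      (((n.choose k : ℝ))⁻¹ *
        ((n : ℝ) - ((k : ℝ) + 1) / 2 -
          (k : ℝ)⁻¹ *
            ∑ j ∈ range k, (j : ℝ) * ((k : ℝ) - (j : ℝ)) / ((n : ℝ) - (j : ℝ)))) 0 := by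
  have hk₀ : k ≠ 0 := Nat.one_le_iff_ne_zero.1 hk
  have hpZero := hasDerivAt_pZero_one hkn.le
  have hpOne := hasDerivAt_pOne_one hk₀ hkn.le
  rw [← sub_zero (1 : ℝ)] at hpZero hpOne
  refine ⟨pZero_one n k, pOne_one n hk₀, ?_, ?_⟩
  · exact (hpZero.comp_const_sub 1 0).congr_deriv (by ring)
  · exact (hpOne.comp_const_sub 1 0).congr_deriv (by ring)
end
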